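/- arXiv:2406.02971 — 2 statements merged into one kernel-verified Lean document; each statement's English description precedes it below -/
import Mathlib

section
/- For every k ≥ 2, the sequence (minS_k(n)/n)_{n ≥ 1} converges to a finite real limit L_k as n → ∞. -/
open List Real

/-- `occ w u` is the number of occurrences of `u` as a subword (subsequence) of `w`,
i.e. the multiplicity of `u` among the `2^|w|` sublists of `w`. -/
def occ {α : Type*} [DecidableEq α] (w u : List α) : ℕ := w.sublists.count u

/-- `maxocc w` is the maximal number of occurrences of any subword of `w`. -/
noncomputable def maxocc {α : Type*} [DecidableEq α] (w : List α) : ℕ :=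
  sSup {n : ℕ | ∃ u : List α, occ w u = n}

/-- `minS k n` is the minimal subword entropy `log₂ (maxocc w)` over words `w`
of length `n` over the alphabet `Fin k`. -/
noncomputable def minS (k n : ℕ) : ℝ :=
  sInf {s : ℝ | ∃ w : List (Fin k), w.length = n ∧ s = Real.logb 2 (maxocc w)}

/-!
Gluing an occurrence of `u₁` in `w₁` to an occurrence of `u₂` in `w₂` gives an occurrence of
`u₁ ++ u₂` in `w₁ ++ w₂`, so subword entropy is superadditive under concatenation. Cutting a word of
length `m + n` after its `m`-th letter makes `minS k` superadditive as well. As a word of length `n`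
has `2 ^ n` sublists, `minS k n ≤ n`, and Fekete's lemma gives the limit.
-/

open Filter Set Topology

lemma count_nsmul_le_sum_map {β M : Type*} [BEq β] [LawfulBEq β] [AddMonoid M] [Preorder M]
    [AddLeftMono M] [AddRightMono M] {l : List β} {f : β → M} (hf : ∀ x ∈ l, 0 ≤ f x) (b : β) :
    l.count b • f b ≤ (l.map f).sum := by
  have hsub : (replicate (l.count b) b).map f <+ l.map f :=
    (replicate_sublist_iff.mpr le_rfl).map f
  rw [map_replicate] at hsub
  simpa only [sum_replicate] using hsub.sum_le_sum (forall_mem_map.mpr hf)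

lemma tendsto_div_of_superadditive {u : ℕ → ℝ} (hadd : ∀ m n, u m + u n ≤ u (m + n))
    (hbdd : BddAbove (range fun n => u n / n)) :
    Tendsto (fun n => u n / n) atTop (𝓝 (sSup ((fun n : ℕ => u n / n) '' Ici 1))) := by
  have hsub : Subadditive (-u) := fun m n => by
    simpa only [Pi.neg_apply, ← neg_add] using neg_le_neg (hadd m n)
  have hneg : (fun n : ℕ => (-u) n / n) = -fun n : ℕ => u n / n :=
    funext fun n => neg_div (n : ℝ) (u n)
  have hlim : hsub.lim = -sSup ((fun n : ℕ => u n / n) '' Ici 1) := by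
    rw [Subadditive.lim, hneg, ← Real.sInf_neg, ← image_neg_eq_neg, image_image]
    rfl
  have hbddBelow : BddBelow (range fun n : ℕ => (-u) n / n) := by
    obtain ⟨C, hC⟩ := hbdd
    refine ⟨-C, forall_mem_range.mpr fun n => ?_⟩
    simpa only [Pi.neg_apply, neg_div] using neg_le_neg (hC (mem_range_self n))
  simpa only [hlim, Pi.neg_apply, neg_div, neg_neg] using (hsub.tendsto_lim hbddBelow).neg

section Entropy

variable {α : Type*} [DecidableEq α]

lemma occ_self_pos (w : List α) : 0 < occ w w :=
  count_pos_iff.mpr (mem_sublists.mpr (Sublist.refl w))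

lemma occ_le_two_pow_length (w u : List α) : occ w u ≤ 2 ^ w.length :=
  count_le_length.trans_eq (length_sublists w)

lemma occ_mul_occ_le_occ_append (w₁ w₂ u₁ u₂ : List α) :
    occ w₁ u₁ * occ w₂ u₂ ≤ occ (w₁ ++ w₂) (u₁ ++ u₂) := by
  -- Sort the occurrences of `u₁ ++ u₂` by their part `v` in `w₂`; the bound keeps only `v = u₂`.
  let extensions (v : List α) : ℕ := (w₁.sublists.map (· ++ v)).count (u₁ ++ u₂)
  calc
    occ w₁ u₁ * occ w₂ u₂ = w₂.sublists.count u₂ • extensions u₂ := by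
      rw [smul_eq_mul, mul_comm]
      exact congrArg _ (count_map_of_injective _ _ (append_left_injective u₂) u₁).symm
    _ ≤ (w₂.sublists.map extensions).sum := count_nsmul_le_sum_map (fun _ _ => Nat.zero_le _) u₂
    _ = occ (w₁ ++ w₂) (u₁ ++ u₂) := by
      rw [occ, sublists_append, bind_eq_flatMap, count_flatMap]
      rfl

lemma bddAbove_occ (w : List α) : BddAbove {n : ℕ | ∃ u : List α, occ w u = n} :=
  ⟨2 ^ w.length, forall_mem_range.mpr (occ_le_two_pow_length w)⟩

lemma occ_le_maxocc (w u : List α) : occ w u ≤ maxocc w :=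
  le_csSup (bddAbove_occ w) ⟨u, rfl⟩

lemma exists_occ_eq_maxocc (w : List α) : ∃ u : List α, occ w u = maxocc w :=
  Nat.sSup_mem (range_nonempty (occ w)) (bddAbove_occ w)

lemma maxocc_pos (w : List α) : 0 < maxocc w :=
  (occ_self_pos w).trans_le (occ_le_maxocc w w)

lemma maxocc_le_two_pow_length (w : List α) : maxocc w ≤ 2 ^ w.length := by
  obtain ⟨u, hu⟩ := exists_occ_eq_maxocc w
  exact hu ▸ occ_le_two_pow_length w u

lemma maxocc_mul_maxocc_le_maxocc_append (w₁ w₂ : List α) :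
    maxocc w₁ * maxocc w₂ ≤ maxocc (w₁ ++ w₂) := by
  obtain ⟨u₁, h₁⟩ := exists_occ_eq_maxocc w₁
  obtain ⟨u₂, h₂⟩ := exists_occ_eq_maxocc w₂
  rw [← h₁, ← h₂]
  exact (occ_mul_occ_le_occ_append w₁ w₂ u₁ u₂).trans (occ_le_maxocc _ _)

/-- The subword entropy `S(w)`: the binary logarithm of the largest multiplicity of a subword
of `w`, which is the quantity minimized by `minS`. -/
noncomputable def subwordEntropy (w : List α) : ℝ :=
  Real.logb 2 (maxocc w)

lemma subwordEntropy_nonneg (w : List α) : 0 ≤ subwordEntropy w :=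
  Real.logb_nonneg one_lt_two (mod_cast maxocc_pos w)

lemma subwordEntropy_le_length (w : List α) : subwordEntropy w ≤ w.length := by
  rw [subwordEntropy, Real.logb_le_iff_le_rpow one_lt_two (mod_cast maxocc_pos w),
    Real.rpow_natCast]
  exact_mod_cast maxocc_le_two_pow_length w

lemma subwordEntropy_add_le_append (w₁ w₂ : List α) :
    subwordEntropy w₁ + subwordEntropy w₂ ≤ subwordEntropy (w₁ ++ w₂) := by
  have h₁ : (0 : ℝ) < maxocc w₁ := mod_cast maxocc_pos w₁
  have h₂ : (0 : ℝ) < maxocc w₂ := mod_cast maxocc_pos w₂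
  rw [subwordEntropy, subwordEntropy, ← Real.logb_mul h₁.ne' h₂.ne']
  exact Real.logb_le_logb_of_le one_lt_two (mul_pos h₁ h₂)
    (mod_cast maxocc_mul_maxocc_le_maxocc_append w₁ w₂)

end Entropy

section MinS

variable {k : ℕ}

lemma minS_le_subwordEntropy {n : ℕ} {w : List (Fin k)} (hw : w.length = n) :
    minS k n ≤ subwordEntropy w := by
  refine csInf_le ⟨0, ?_⟩ ⟨w, hw, rfl⟩
  rintro _ ⟨v, -, rfl⟩
  exact subwordEntropy_nonneg v

lemma le_minS (hk : 0 < k) {n : ℕ} {c : ℝ}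
    (h : ∀ w : List (Fin k), w.length = n → c ≤ subwordEntropy w) : c ≤ minS k n := by
  refine le_csInf ⟨_, replicate n ⟨0, hk⟩, length_replicate, rfl⟩ ?_
  rintro _ ⟨w, hw, rfl⟩
  exact h w hw

lemma minS_le_natCast (hk : 0 < k) (n : ℕ) : minS k n ≤ n := by
  have hlen : (replicate n (⟨0, hk⟩ : Fin k)).length = n := length_replicate
  calc
    minS k n ≤ subwordEntropy (replicate n (⟨0, hk⟩ : Fin k)) := minS_le_subwordEntropy hlen
    _ ≤ n := (subwordEntropy_le_length _).trans_eq (congrArg _ hlen)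

lemma minS_add_minS_le (hk : 0 < k) (m n : ℕ) : minS k m + minS k n ≤ minS k (m + n) := by
  refine le_minS hk fun w hw => ?_
  calc
    minS k m + minS k n ≤ subwordEntropy (w.take m) + subwordEntropy (w.drop m) :=
      add_le_add (minS_le_subwordEntropy (by simp [hw])) (minS_le_subwordEntropy (by simp [hw]))
    _ ≤ subwordEntropy (w.take m ++ w.drop m) := subwordEntropy_add_le_append _ _
    _ = subwordEntropy w := by rw [take_append_drop]

lemma bddAbove_range_minS_div (hk : 0 < k) : BddAbove (range fun n : ℕ => minS k n / n) :=
  ⟨1, forall_mem_range.mpr fun n => div_le_one_of_le₀ (minS_le_natCast hk n) n.cast_nonneg⟩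

end MinS

theorem stmt_6_general {k : ℕ} (hk : 0 < k) :
    Tendsto (fun n : ℕ => minS k n / n) atTop
      (𝓝 (sSup ((fun n : ℕ => minS k n / n) '' Ici 1))) :=
  tendsto_div_of_superadditive (minS_add_minS_le hk) (bddAbove_range_minS_div hk)

theorem stmt_6 (k : ℕ) (hk : 2 ≤ k) :
    ∃ L : ℝ, Filter.Tendsto (fun n : ℕ => minS k n / n) Filter.atTop (nhds L) :=
  ⟨_, stmt_6_general (zero_lt_two.trans_le hk)⟩
end

section
/- For all m, r ≥ 0, occ((0011)^m, (01)^r) = 4^r · C(m + r, 2r), where C denotes the binomial coefficient (so in particular the count is 0 when r > m). -/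
open List Real

/-- `rep v m` is the concatenation of `m` copies of the word `v`. -/
def rep {α : Type*} (v : List α) (m : ℕ) : List α := (List.replicate m v).flatten

/-!
An occurrence of an alternating word uses at most one letter from each run of equal letters. In
`(a^p b^q)^m` the initial `a` of an occurrence of `a b u` can therefore be chosen in `p` ways from
one of the `m` blocks, the rest being read from that block onwards; the `b` can then be chosen in
`q` ways from a remaining block, and `u` is read strictly after it. Each letter thus contributes a
factor `p` or `q` and a sum over the number of remaining blocks, and the hockey-stick identity turns
the `2r` nested sums for `(ab)^r` into `C(m+r, 2r)`. The upper index grows only once per pair `ab`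
because `b` may be taken from the same block as the preceding `a`.
-/

section Occ

variable {α : Type*} [DecidableEq α]

theorem occ_eq_count_sublists' (w u : List α) : occ w u = w.sublists'.count u :=
  (sublists_perm_sublists' w).count_eq u

theorem occ_nil_cons (a : α) (u : List α) : occ [] (a :: u) = 0 := by
  simp [occ]

theorem occ_cons_cons_self (a : α) (w u : List α) :
    occ (a :: w) (a :: u) = occ w (a :: u) + occ w u := by
  simp only [occ_eq_count_sublists', sublists'_cons, count_append,
    count_map_of_injective _ _ cons_injective]

theorem occ_cons_of_head?_ne {a : α} {u : List α} (hu : u.head? ≠ some a) (w : List α) :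
    occ (a :: w) u = occ w u := by
  have hu_notMem : u ∉ w.sublists'.map (cons a) := by
    intro hmem
    obtain ⟨v, -, rfl⟩ := mem_map.mp hmem
    exact hu head?_cons
  simp only [occ_eq_count_sublists', sublists'_cons, count_append,
    count_eq_zero_of_not_mem hu_notMem, add_zero]

theorem occ_nil_right (w : List α) : occ w [] = 1 := by
  induction w with
  | nil => simp [occ]
  | cons a w ih => rw [occ_cons_of_head?_ne (by simp), ih]

theorem occ_replicate_append_of_head?_ne {a : α} {u : List α} (hu : u.head? ≠ some a)
    (n : ℕ) (w : List α) : occ (replicate n a ++ w) u = occ w u := by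
  induction n with
  | zero => rfl
  | succ n ih => rw [replicate_succ, cons_append, occ_cons_of_head?_ne hu, ih]

theorem occ_replicate_append_cons_self {a : α} {u : List α} (hu : u.head? ≠ some a)
    (n : ℕ) (w : List α) :
    occ (replicate n a ++ w) (a :: u) = occ w (a :: u) + n * occ w u := by
  induction n with
  | zero => simp
  | succ n ih =>
    rw [replicate_succ, cons_append, occ_cons_cons_self, ih,
      occ_replicate_append_of_head?_ne hu]
    ring

end Occ

section Rep

variable {α : Type*}

theorem rep_zero (v : List α) : rep v 0 = [] := rfl

theorem rep_succ (v : List α) (m : ℕ) : rep v (m + 1) = v ++ rep v m := by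
  simp only [rep, replicate_succ, flatten_cons]

theorem head?_rep_pair_ne {a b : α} (hab : a ≠ b) (r : ℕ) : (rep [a, b] r).head? ≠ some b := by
  cases r <;> simp [rep_zero, rep_succ, hab]

end Rep

section Blocks

variable {α : Type*} [DecidableEq α] {a b : α}

theorem occ_rep_block_cons_fst (hab : a ≠ b) {u : List α} (hu : u.head? ≠ some a) (p q m : ℕ) :
    occ (rep (replicate p a ++ replicate q b) m) (a :: u) =
      p * ∑ i ∈ Finset.range m, occ (rep (replicate p a ++ replicate q b) (i + 1)) u := by
  have hb : (a :: u).head? ≠ some b := by simpa using hab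
  induction m with
  | zero => simp [rep_zero, occ_nil_cons]
  | succ m ih =>
    rw [Finset.sum_range_succ, mul_add, ← ih, rep_succ, append_assoc,
      occ_replicate_append_cons_self hu, occ_replicate_append_of_head?_ne hb,
      occ_replicate_append_of_head?_ne hu]

theorem occ_rep_block_cons_snd (hab : a ≠ b) {u : List α} (hu : u.head? ≠ some b) (p q m : ℕ) :
    occ (rep (replicate p a ++ replicate q b) m) (b :: u) =
      q * ∑ i ∈ Finset.range m, occ (rep (replicate p a ++ replicate q b) i) u := by
  have ha : (b :: u).head? ≠ some a := by simpa using hab.symm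
  induction m with
  | zero => simp [rep_zero, occ_nil_cons]
  | succ m ih =>
    rw [Finset.sum_range_succ, mul_add, ← ih, rep_succ, append_assoc,
      occ_replicate_append_of_head?_ne ha, occ_replicate_append_cons_self hu]

end Blocks

theorem sum_range_add_choose_of_le {r k : ℕ} (hrk : r ≤ k) (m : ℕ) :
    ∑ i ∈ Finset.range m, (i + r).choose k = (m + r).choose (k + 1) := by
  induction m with
  | zero => simp [Nat.choose_eq_zero_of_lt (Nat.lt_succ_of_le hrk)]
  | succ m ih =>
    rw [Finset.sum_range_succ, ih, Nat.add_right_comm m 1 r, Nat.choose_succ_succ', add_comm]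

theorem stmt_9_general {α : Type*} [DecidableEq α] {a b : α} (hab : a ≠ b) (p q m r : ℕ) :
    occ (rep (replicate p a ++ replicate q b) m) (rep [a, b] r) =
      (p * q) ^ r * (m + r).choose (2 * r) := by
  induction r generalizing m with
  | zero => simp [rep_zero, occ_nil_right]
  | succ r ih =>
    have occ_cons_rep (i : ℕ) :
        occ (rep (replicate p a ++ replicate q b) i) (b :: rep [a, b] r) =
          q * (p * q) ^ r * (i + r).choose (2 * r + 1) := by
      simp only [occ_rep_block_cons_snd hab (head?_rep_pair_ne hab r), ih, ← Finset.mul_sum,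
        sum_range_add_choose_of_le (Nat.le_mul_of_pos_left r two_pos), mul_assoc]
    calc occ (rep (replicate p a ++ replicate q b) m) (a :: b :: rep [a, b] r)
      _ = p * ∑ i ∈ Finset.range m,
            occ (rep (replicate p a ++ replicate q b) (i + 1)) (b :: rep [a, b] r) :=
        occ_rep_block_cons_fst hab (by simpa using hab.symm) p q m
      _ = (p * q) ^ (r + 1) * ∑ i ∈ Finset.range m, (i + (r + 1)).choose (2 * r + 1) := by
        simp only [occ_cons_rep, ← Finset.mul_sum, Nat.add_assoc, Nat.add_comm 1 r]
        ring
      _ = (p * q) ^ (r + 1) * (m + (r + 1)).choose (2 * (r + 1)) := by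
        rw [sum_range_add_choose_of_le (by lia), Nat.mul_succ]

theorem stmt_9 (m r : ℕ) :
    occ (rep ([0, 0, 1, 1] : List (Fin 2)) m) (rep [0, 1] r) =
      4 ^ r * (m + r).choose (2 * r) :=
  stmt_9_general (a := (0 : Fin 2)) (b := 1) (by decide) 2 2 m r
end
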